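/- Let k be a field of characteristic 0, let μ, λ ∈ k with μ ≠ 0, and let F = μ·det₃ − λ(x₁ + x₅ + x₉)³ ∈ k[x₁,…,x₉], where x₁,…,x₉ are the entries of the generic 3×3 matrix read row by row. Then the apolar ideal F^⊥ ⊆ k[y₁,…,y₉] is generated by the following 36 linearly independent quadrics: y₂², y₃², y₄², y₆², y₇², y₈², y₁² − y₉², y₅² − y₉², y₁y₂, y₁y₃, y₁y₄, y₁y₇, y₂y₃, y₂y₅, y₂y₈, y₃y₆, y₃y₉, y₄y₅, y₄y₆, y₄y₇, y₅y₆, y₅y₈, y₆y₉, y₇y₈, y₇y₉, y₈y₉, y₁y₆ + y₃y₄, y₁y₈ + y₂y₇, y₂y₉ + y₃y₈, y₂y₆ + y₃y₅, y₄y₈ + y₅y₇, y₄y₉ + y₆y₇, y₁y₅ + y₂y₄ − y₉², y₁y₉ + y₃y₇ − y₉², y₅y₉ + y₆y₈ − y₉², and μy₁² − 6λ(y₆y₈ + y₃y₇ + y₂y₄). -/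

import Mathlib

open MvPolynomial

/-- The generic 3×3 determinant in the variables `x₁,…,x₉ = X 0,…,X 8`
(the entries of the generic 3×3 matrix, read row by row). -/
noncomputable def det3' (k : Type*) [CommRing k] : MvPolynomial (Fin 9) k :=
  X 0 * X 4 * X 8 - X 0 * X 5 * X 7 - X 1 * X 3 * X 8
    + X 1 * X 5 * X 6 + X 2 * X 3 * X 7 - X 2 * X 4 * X 6

/-- The apolarity action: `diffAction θ F` is the result `θ ∘ F` of applying the
constant-coefficient differential operator obtained from `θ` by substituting
`y_i ↦ ∂/∂x_i` to the polynomial `F`. -/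
noncomputable def diffAction {k : Type*} [CommSemiring k] {σ : Type*}
    (θ F : MvPolynomial σ k) : MvPolynomial σ k :=
  ∑ a ∈ θ.support, ∑ b ∈ F.support,
    monomial (b - a) (θ.coeff a * F.coeff b * ∏ i ∈ a.support, ((b i).descFactorial (a i) : k))

/-- The 36 quadrics (in the dual variables `y₁,…,y₉ = X 0,…,X 8`) generating the apolar
ideal of `μ·det₃ − λ(x₁+x₅+x₉)³`. -/
noncomputable def apolarQuadrics {k : Type*} [CommRing k] (μ lam : k) :
    Fin 36 → MvPolynomial (Fin 9) k :=
  ![X 1 ^ 2, X 2 ^ 2, X 3 ^ 2, X 5 ^ 2, X 6 ^ 2, X 7 ^ 2,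
    X 0 ^ 2 - X 8 ^ 2, X 4 ^ 2 - X 8 ^ 2,
    X 0 * X 1, X 0 * X 2, X 0 * X 3, X 0 * X 6, X 1 * X 2, X 1 * X 4, X 1 * X 7,
    X 2 * X 5, X 2 * X 8,
    X 3 * X 4, X 3 * X 5, X 3 * X 6, X 4 * X 5, X 4 * X 7, X 5 * X 8, X 6 * X 7,
    X 6 * X 8, X 7 * X 8,
    X 0 * X 5 + X 2 * X 3, X 0 * X 7 + X 1 * X 6, X 1 * X 8 + X 2 * X 7,
    X 1 * X 5 + X 2 * X 4, X 3 * X 7 + X 4 * X 6, X 3 * X 8 + X 5 * X 6,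
    X 0 * X 4 + X 1 * X 3 - X 8 ^ 2, X 0 * X 8 + X 2 * X 6 - X 8 ^ 2,
    X 4 * X 8 + X 5 * X 7 - X 8 ^ 2,
    C μ * X 0 ^ 2 - C (6 * lam) * (X 5 * X 7 + X 2 * X 6 + X 1 * X 3)]

/-!
Write `F = μ·det₃ − λ(x₁+x₅+x₉)³` and let `A` be the polynomial ring modulo the 36 quadrics, with
`y_i` the class of the `i`-th variable. In `A` one finds quadrics `q_j`, one for each variable, that
span all products `y_i y_j` and satisfy `y_i q_j = δ_ij t` for a single cubic `t`. So `A` is spanned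
by `1`, the `y_i`, the `q_j` and `t`, and multiplication pairs these perfectly into `t`. Hence a
nonzero ideal of `A` contains a nonzero scalar multiple of `t`. The image of `F^⊥` in `A` does not,
since `t ∘ F = μ` is invertible; so that image is zero.
-/

/-- The multiplicative part of the structure of a Gorenstein (Poincaré duality) algebra of socle
degree three: `y` generates `A`, products of two generators are combinations of the quadrics `q`,
and multiplication pairs `y` and `q` as dual families into the socle generator `t`. Linear
independence of `1`, `y`, `q`, `t` is not demanded. -/
structure IsCubicDualSystem (k : Type*) {ι A : Type*} [DecidableEq ι] [CommRing k] [CommRing A]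
    [Algebra k A] (y q : ι → A) (t : A) : Prop where
  aeval_surjective : Function.Surjective (aeval (R := k) y)
  mul_mem_span : ∀ i j, y i * y j ∈ Submodule.span k (Set.range q)
  mul_dual : ∀ i j, y i * q j = if i = j then t else 0
  dual_mul_dual : ∀ i j, q i * q j = 0

namespace IsCubicDualSystem

variable {k ι A : Type*} [DecidableEq ι] [CommRing k] [CommRing A] [Algebra k A] {y q : ι → A}
  {t : A}

theorem mul_dual_self (h : IsCubicDualSystem k y q t) (i : ι) : y i * q i = t := by
  simp [h.mul_dual]

theorem mul_dual_of_ne (h : IsCubicDualSystem k y q t) {i j : ι} (hij : i ≠ j) :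
    y i * q j = 0 := by
  simp [h.mul_dual, hij]

theorem dual_mul_socle (h : IsCubicDualSystem k y q t) (i : ι) : q i * t = 0 := by
  rw [← h.mul_dual_self i, mul_left_comm, h.dual_mul_dual, mul_zero]

section Nontrivial

variable [Nontrivial ι]

theorem mul_socle (h : IsCubicDualSystem k y q t) (i : ι) : y i * t = 0 := by
  obtain ⟨j, hj⟩ := exists_ne i
  rw [← h.mul_dual_self j, mul_left_comm, h.mul_dual_of_ne hj.symm, mul_zero]

theorem socle_mul_socle (h : IsCubicDualSystem k y q t) : t * t = 0 := by
  obtain ⟨i, -⟩ := exists_pair_ne ι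
  nth_rw 1 [← h.mul_dual_self i]
  rw [mul_assoc, h.dual_mul_socle, mul_zero]

theorem span_eq_top (h : IsCubicDualSystem k y q t) :
    Submodule.span k ({1} ∪ Set.range y ∪ Set.range q ∪ {t}) = ⊤ := by
  set M := Submodule.span k ({1} ∪ Set.range y ∪ Set.range q ∪ {t})
  have hq : Submodule.span k (Set.range q) ≤ M := Submodule.span_mono (by grind)
  have hM (i : ι) : M ≤ M.comap (LinearMap.mulLeft k (y i)) := by
    rw [Submodule.span_le]
    rintro _ (((rfl | ⟨j, rfl⟩) | ⟨j, rfl⟩) | rfl)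
    · exact Submodule.subset_span (by simp)
    · exact hq (h.mul_mem_span i j)
    · change y i * q j ∈ M
      rw [h.mul_dual]
      split_ifs
      · exact Submodule.subset_span (by simp)
      · exact M.zero_mem
    · change y i * _ ∈ M
      rw [h.mul_socle]
      exact M.zero_mem
  rw [Submodule.eq_top_iff']
  refine h.aeval_surjective.forall.mpr fun p => ?_
  induction p using MvPolynomial.induction_on with
  | C c =>
    rw [aeval_C, Algebra.algebraMap_eq_smul_one]
    exact M.smul_mem _ (Submodule.subset_span (by simp))
  | add p r hp hr => simpa using M.add_mem hp hr
  | mul_X p i hp => simpa [mul_comm] using hM i hp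

theorem exists_eq_sum [Fintype ι] (h : IsCubicDualSystem k y q t) (x : A) :
    ∃ (c : k) (a b : ι → k) (d : k),
      x = c • 1 + ∑ i, a i • y i + ∑ i, b i • q i + d • t := by
  have hx : x ∈ Submodule.span k ({1} ∪ Set.range y ∪ Set.range q ∪ {t}) :=
    h.span_eq_top ▸ Submodule.mem_top
  simp only [Submodule.span_union, Submodule.mem_sup, Submodule.mem_span_singleton,
    Submodule.mem_span_range_iff_exists_fun] at hx
  obtain ⟨_, ⟨_, ⟨_, ⟨c, rfl⟩, _, ⟨a, rfl⟩, rfl⟩, _, ⟨b, rfl⟩, rfl⟩, _, ⟨d, rfl⟩, rfl⟩ := hx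
  exact ⟨c, a, b, d, rfl⟩

theorem eq_bot_of_smul_socle_mem [Finite ι] (h : IsCubicDualSystem k y q t) {J : Ideal A}
    (hJ : ∀ c : k, c • t ∈ J → c = 0) : J = ⊥ := by
  cases nonempty_fintype ι
  refine (Submodule.eq_bot_iff J).mpr fun x hx => ?_
  obtain ⟨c, a, b, d, rfl⟩ := h.exists_eq_sum x
  obtain rfl : c = 0 := hJ c <| by
    simpa [add_mul, Finset.sum_mul, h.mul_socle, h.dual_mul_socle, h.socle_mul_socle]
      using J.mul_mem_right t hx
  obtain rfl : a = 0 := funext fun i => hJ _ <| by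
    simpa [add_mul, Finset.sum_mul, h.mul_dual, h.dual_mul_dual, mul_comm t, h.dual_mul_socle]
      using J.mul_mem_right (q i) hx
  obtain rfl : b = 0 := funext fun i => hJ _ <| by
    simpa [mul_add, Finset.mul_sum, h.mul_dual, h.mul_socle] using J.mul_mem_left (y i) hx
  obtain rfl : d = 0 := hJ d <| by simpa using hx
  simp

end Nontrivial

end IsCubicDualSystem

section DiffAction

variable {k : Type*} [CommSemiring k] {σ : Type*}

theorem diffAction_eq_sum_of_subset (θ F : MvPolynomial σ k) {s : Finset (σ →₀ ℕ)}
    (hs : θ.support ⊆ s) :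
    diffAction θ F = ∑ a ∈ s, ∑ b ∈ F.support,
      monomial (b - a) (θ.coeff a * F.coeff b *
        ∏ i ∈ a.support, ((b i).descFactorial (a i) : k)) :=
  Finset.sum_subset hs fun a _ ha => Finset.sum_eq_zero fun b _ => by
    simp [notMem_support_iff.mp ha]

theorem diffAction_zero (F : MvPolynomial σ k) : diffAction 0 F = 0 := by
  simp [diffAction]

theorem diffAction_one (F : MvPolynomial σ k) : diffAction 1 F = F := by
  classical
  rw [diffAction_eq_sum_of_subset 1 F (s := {0}) (support_monomial_subset)]
  simp

theorem diffAction_add (θ η F : MvPolynomial σ k) :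
    diffAction (θ + η) F = diffAction θ F + diffAction η F := by
  classical
  rw [diffAction_eq_sum_of_subset (θ + η) F support_add,
    diffAction_eq_sum_of_subset θ F Finset.subset_union_left,
    diffAction_eq_sum_of_subset η F Finset.subset_union_right, ← Finset.sum_add_distrib]
  simp only [coeff_add, add_mul, map_add, Finset.sum_add_distrib]

theorem diffAction_C_mul (c : k) (θ F : MvPolynomial σ k) :
    diffAction (C c * θ) F = C c * diffAction θ F := by
  have hs : (C c * θ).support ⊆ θ.support := by
    rw [C_mul']
    exact support_smul
  rw [diffAction_eq_sum_of_subset _ F hs, diffAction]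
  simp only [coeff_C_mul, Finset.mul_sum, C_mul_monomial, mul_assoc]

theorem prod_descFactorial_single_add (i : σ) (a b : σ →₀ ℕ) :
    ∏ j ∈ (Finsupp.single i 1 + a).support,
        (b j).descFactorial ((Finsupp.single i 1 + a : σ →₀ ℕ) j) =
      (∏ j ∈ a.support, (b j).descFactorial (a j)) * (b i - a i) := by
  classical
  have hprod {c : σ →₀ ℕ} (hc : c.support ⊆ insert i a.support) :
      ∏ j ∈ c.support, (b j).descFactorial (c j) =
        ∏ j ∈ insert i a.support, (b j).descFactorial (c j) :=
    Finset.prod_subset hc fun j _ hj => by simp [Finsupp.notMem_support_iff.mp hj]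
  have hi : i ∈ insert i a.support := Finset.mem_insert_self _ _
  have hsupp : (Finsupp.single i 1 + a).support ⊆ insert i a.support := by
    refine Finsupp.support_add.trans (Finset.union_subset ?_ (Finset.subset_insert _ _))
    exact Finsupp.support_single_subset.trans (by simp)
  have herase : ∏ j ∈ (insert i a.support).erase i,
      (b j).descFactorial ((Finsupp.single i 1 + a : σ →₀ ℕ) j) =
      ∏ j ∈ (insert i a.support).erase i, (b j).descFactorial (a j) :=
    Finset.prod_congr rfl fun j hj => by
      simp [Finsupp.single_eq_of_ne (Finset.ne_of_mem_erase hj)]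
  rw [hprod hsupp, hprod (Finset.subset_insert _ _), ← Finset.mul_prod_erase _ _ hi,
    ← Finset.mul_prod_erase _ (fun j => (b j).descFactorial (a j)) hi, herase,
    Finsupp.add_apply, Finsupp.single_eq_same, add_comm 1, Nat.descFactorial_succ]
  ring

theorem diffAction_X_mul (i : σ) (θ F : MvPolynomial σ k) :
    diffAction (X i * θ) F = pderiv i (diffAction θ F) := by
  simp only [diffAction, support_X_mul, Finset.sum_map, map_sum, pderiv_monomial,
    addLeftEmbedding_apply, coeff_X_mul, tsub_add_eq_tsub_tsub_swap, Finsupp.tsub_apply,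
    ← Nat.cast_prod, prod_descFactorial_single_add, Nat.cast_mul, mul_assoc]

theorem diffAction_X (i : σ) (F : MvPolynomial σ k) : diffAction (X i) F = pderiv i F := by
  rw [← mul_one (X i), diffAction_X_mul, diffAction_one]

theorem diffAction_mul_eq_zero {θ F : MvPolynomial σ k} (h : diffAction θ F = 0)
    (η : MvPolynomial σ k) : diffAction (η * θ) F = 0 := by
  induction η using MvPolynomial.induction_on with
  | C c => rw [diffAction_C_mul, h, mul_zero]
  | add p q hp hq => rw [add_mul, diffAction_add, hp, hq, add_zero]
  | mul_X p i hp => rw [mul_comm p, mul_assoc, diffAction_X_mul, hp, map_zero]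

/-- The apolar ideal `F^⊥` of all differential operators killing `F`. -/
noncomputable def apolarIdeal (F : MvPolynomial σ k) : Ideal (MvPolynomial σ k) where
  carrier := {θ | diffAction θ F = 0}
  add_mem' {θ η} (hθ : _ = _) (hη : _ = _) :=
    show _ = _ by rw [diffAction_add, hθ, hη, add_zero]
  zero_mem' := diffAction_zero F
  smul_mem' η _ hθ := diffAction_mul_eq_zero hθ η

end DiffAction

theorem diffAction_sub {k : Type*} [CommRing k] {σ : Type*} (θ η F : MvPolynomial σ k) :
    diffAction (θ - η) F = diffAction θ F - diffAction η F := by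
  rw [eq_sub_iff_add_eq, ← diffAction_add, sub_add_cancel]

/-- The cell `i` of the 3×3 grid lies on the main diagonal. As everywhere below, the cells are
numbered row by row from `0`, so cell `i` has row `i / 3` and column `i % 3`. -/
abbrev OnDiagonal (i : Fin 9) : Prop :=
  i.val / 3 = i.val % 3

/-- The pairs of cells whose product is one of the apolar quadrics: two cells on a common line,
excluding a diagonal cell paired with itself. -/
abbrev IsNullPair (i j : Fin 9) : Prop :=
  (i.val / 3 = j.val / 3 ∨ i.val % 3 = j.val % 3) ∧ (i = j → ¬OnDiagonal i)

/-- The cell in the row of `i` and the column of `j`. -/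
def cornerCell (i j : Fin 9) : Fin 9 := ⟨3 * (i.val / 3) + j.val % 3, by omega⟩

/-- Deleting the row and column of `n` leaves a 2×2 minor; `minorPair n` is the one of its two
diagonals that avoids the main diagonal of the grid. -/
def minorPair : Fin 9 → Fin 9 × Fin 9 :=
  ![(5, 7), (5, 6), (3, 7), (2, 7), (2, 6), (1, 6), (1, 5), (2, 3), (1, 3)]

/-- The diagonal, other than `minorPair n`, of the 2×2 minor complementary to `n`. -/
def minorOppositePair (n : Fin 9) : Fin 9 × Fin 9 :=
  (cornerCell (minorPair n).1 (minorPair n).2, cornerCell (minorPair n).2 (minorPair n).1)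

theorem isNullPair_minorPair_of_ne {i j : Fin 9} (hij : i ≠ j) :
    IsNullPair i (minorPair j).1 ∨ IsNullPair i (minorPair j).2 := by
  revert i j
  decide

theorem minorPair_fst_ne_snd (n : Fin 9) : (minorPair n).1 ≠ (minorPair n).2 := by
  revert n
  decide

theorem isNullPair_or_diagonal_or_minor (i j : Fin 9) :
    IsNullPair i j ∨ (i = j ∧ OnDiagonal i) ∨
      (∃ n, s(i, j) = s((minorPair n).1, (minorPair n).2)) ∨
      ∃ n, s(i, j) = s((minorOppositePair n).1, (minorOppositePair n).2) := by
  revert i j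
  decide

/-- A monomial `X i * X j` occurring in the `n`-th apolar quadric, given as the pair `(i, j)`. These
are chosen so that the coefficients of the quadrics at these monomials form a triangular matrix,
up to reordering. -/
def apolarPivot : Fin 36 → Fin 9 × Fin 9 :=
  ![(1, 1), (2, 2), (3, 3), (5, 5), (6, 6), (7, 7), (8, 8), (4, 4), (0, 1), (0, 2), (0, 3), (0, 6),
    (1, 2), (1, 4), (1, 7), (2, 5), (2, 8), (3, 4), (3, 5), (3, 6), (4, 5), (4, 7), (5, 8), (6, 7),
    (6, 8), (7, 8), (0, 5), (0, 7), (1, 8), (1, 5), (3, 7), (3, 8), (0, 4), (0, 8), (4, 8), (0, 0)]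

/-- The index of the apolar quadric that is the permanent of the 2×2 minor complementary to `n`,
corrected by `X 8 ^ 2` if the minor is principal. -/
def permanentIndex : Fin 9 → Fin 36 :=
  ![34, 31, 30, 28, 33, 27, 29, 26, 32]

theorem exists_apolarPivot_eq {i j : Fin 9} (hij : IsNullPair i j) :
    ∃ n, apolarPivot n = (i, j) ∨ apolarPivot n = (j, i) := by
  revert i j
  decide

theorem coeff_X_mul_X {σ R : Type*} [DecidableEq σ] [CommSemiring R] (i j a b : σ) :
    coeff (Finsupp.single i 1 + Finsupp.single j 1) (X a * X b : MvPolynomial σ R) =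
      if s(a, b) = s(i, j) then 1 else 0 := by
  simp [X, monomial_mul, coeff_monomial, Finsupp.single_add_single_eq_single_add_single]

section ApolarQuadrics

variable {k : Type*} [CommRing k] (μ lam : k)

theorem apolarQuadrics_of_isNullPair {n : Fin 36}
    (hn : IsNullPair (apolarPivot n).1 (apolarPivot n).2) :
    apolarQuadrics μ lam n = X (apolarPivot n).1 * X (apolarPivot n).2 := by
  fin_cases n <;> first
    | exact absurd hn (by decide)
    | simp [apolarQuadrics, apolarPivot, pow_two]

theorem apolarQuadrics_permanentIndex (n : Fin 9) :
    apolarQuadrics μ lam (permanentIndex n) =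
      X (minorPair n).1 * X (minorPair n).2 +
        X (minorOppositePair n).1 * X (minorOppositePair n).2 -
        if OnDiagonal n then X 8 ^ 2 else 0 := by
  fin_cases n <;>
    simp [apolarQuadrics, permanentIndex, minorPair, minorOppositePair, cornerCell, OnDiagonal,
      add_comm]

theorem linearIndependent_apolarQuadrics {μ : k} (hμ : IsUnit μ) (lam : k) :
    LinearIndependent k (apolarQuadrics μ lam) := by
  rw [Fintype.linearIndependent_iff]
  intro c hc
  have hcoeff (i j : Fin 9) := congrArg (coeff (Finsupp.single i 1 + Finsupp.single j 1)) hc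
  simp only [Fin.sum_univ_succ, apolarQuadrics, pow_two, coeff_add, coeff_sub, coeff_smul,
    mul_add, coeff_C_mul, coeff_X_mul_X, coeff_zero, Matrix.cons_val_zero,
    Matrix.cons_val_succ] at hcoeff
  have hpivot (n : Fin 36) (h₆ : n ≠ 6) (h₃₅ : n ≠ 35) : c n = 0 := by
    have h := hcoeff (apolarPivot n).1 (apolarPivot n).2
    clear hc hcoeff
    fin_cases n <;> first | contradiction | simpa [apolarPivot] using h
  have h₆ : c 6 = 0 := by
    have h := hcoeff 8 8
    simpa [hpivot] using h
  have h₃₅ : c 35 = 0 := hμ.mul_left_eq_zero.mp <| by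
    have h := hcoeff 0 0
    simpa [hpivot, h₆] using h
  intro n
  by_cases hn₆ : n = 6
  · rwa [hn₆]
  by_cases hn₃₅ : n = 35
  · rwa [hn₃₅]
  exact hpivot n hn₆ hn₃₅

end ApolarQuadrics

/-- The quadric dual to the generator `y n`: up to sign, the product of the entries of `y` on
`minorPair n`. -/
def dualQuadric {A : Type*} [Ring A] (y : Fin 9 → A) (n : Fin 9) : A :=
  (if OnDiagonal n then -1 else 1) * (y (minorPair n).1 * y (minorPair n).2)

section Relations

variable {k A : Type*} [CommRing k] [CommRing A] [Algebra k A] {μ lam : k} {y : Fin 9 → A}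

theorem mul_eq_zero_of_isNullPair (h : ∀ n, aeval y (apolarQuadrics μ lam n) = 0) {i j : Fin 9}
    (hij : IsNullPair i j) : y i * y j = 0 := by
  wlog hpivot : ∃ n, apolarPivot n = (i, j) generalizing i j
  · obtain ⟨n, hn | hn⟩ := exists_apolarPivot_eq hij
    · exact absurd ⟨n, hn⟩ hpivot
    · rw [mul_comm]
      exact this (by grind) ⟨n, hn⟩
  obtain ⟨n, hn⟩ := hpivot
  simpa [apolarQuadrics_of_isNullPair μ lam (n := n) (by rwa [hn]), hn] using h n

theorem minorPair_add_minorOppositePair (h : ∀ n, aeval y (apolarQuadrics μ lam n) = 0)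
    (n : Fin 9) :
    y (minorPair n).1 * y (minorPair n).2 + y (minorOppositePair n).1 * y (minorOppositePair n).2 =
      if OnDiagonal n then y 8 ^ 2 else 0 := by
  simpa [apolarQuadrics_permanentIndex, apply_ite (aeval y), sub_eq_zero] using h (permanentIndex n)

theorem sq_eq_sq_of_onDiagonal (h : ∀ n, aeval y (apolarQuadrics μ lam n) = 0) {i : Fin 9}
    (hi : OnDiagonal i) : y i ^ 2 = y 8 ^ 2 := by
  have h₀ : y 0 ^ 2 = y 8 ^ 2 := by simpa [apolarQuadrics, sub_eq_zero] using h 6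
  have h₄ : y 4 ^ 2 = y 8 ^ 2 := by simpa [apolarQuadrics, sub_eq_zero] using h 7
  obtain rfl | rfl | rfl : i = 0 ∨ i = 4 ∨ i = 8 := by
    revert i
    decide
  exacts [h₀, h₄, rfl]

theorem smul_sq_eq_smul_add (h : ∀ n, aeval y (apolarQuadrics μ lam n) = 0) :
    μ • y 0 ^ 2 = (6 * lam) • (y 5 * y 7 + y 2 * y 6 + y 1 * y 3) := by
  simpa [apolarQuadrics, sub_eq_zero, Algebra.smul_def] using h 35

theorem mul_dualQuadric_of_ne (h : ∀ n, aeval y (apolarQuadrics μ lam n) = 0) {i j : Fin 9}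
    (hij : i ≠ j) : y i * dualQuadric y j = 0 := by
  rw [dualQuadric, mul_left_comm]
  obtain hnull | hnull := isNullPair_minorPair_of_ne hij
  · rw [← mul_assoc (y i), mul_eq_zero_of_isNullPair h hnull, zero_mul, mul_zero]
  · rw [mul_left_comm (y i), mul_eq_zero_of_isNullPair h hnull, mul_zero, mul_zero]

theorem mul_dualQuadric_self (h : ∀ n, aeval y (apolarQuadrics μ lam n) = 0) (i : Fin 9) :
    y i * dualQuadric y i = y 1 * y 5 * y 6 := by
  have h₁₈ : y 2 * y 7 + y 1 * y 8 = 0 := minorPair_add_minorOppositePair h 3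
  have h₀₇ : y 1 * y 6 + y 0 * y 7 = 0 := minorPair_add_minorOppositePair h 5
  have h₂₄ : y 1 * y 5 + y 2 * y 4 = 0 := minorPair_add_minorOppositePair h 6
  have h₀₅ : y 2 * y 3 + y 0 * y 5 = 0 := minorPair_add_minorOppositePair h 7
  have hcycle : y 2 * y 3 * y 7 = y 1 * y 5 * y 6 := by
    linear_combination y 7 * h₀₅ - y 5 * h₀₇
  fin_cases i <;> simp [dualQuadric, minorPair, OnDiagonal]
  · linear_combination -y 5 * h₀₇
  · ring
  · linear_combination hcycle
  · linear_combination hcycle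
  · linear_combination -y 6 * h₂₄
  · ring
  · ring
  · linear_combination hcycle
  · linear_combination hcycle - y 3 * h₁₈

theorem dualQuadric_mul_dualQuadric (h : ∀ n, aeval y (apolarQuadrics μ lam n) = 0)
    (i j : Fin 9) : dualQuadric y i * dualQuadric y j = 0 := by
  obtain hij | hij : (minorPair i).1 ≠ j ∨ (minorPair i).2 ≠ j := by
    by_contra! hj
    exact minorPair_fst_ne_snd i (hj.1.trans hj.2.symm)
  all_goals
    have hzero := mul_dualQuadric_of_ne h hij
    nth_rw 1 [dualQuadric]
    grind

theorem minorPair_mul_mem_span (n : Fin 9) :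
    y (minorPair n).1 * y (minorPair n).2 ∈ Submodule.span k (Set.range (dualQuadric y)) := by
  have hn : dualQuadric y n ∈ Submodule.span k (Set.range (dualQuadric y)) :=
    Submodule.subset_span ⟨n, rfl⟩
  rw [dualQuadric] at hn
  split_ifs at hn
  · simpa using hn
  · simpa using hn

theorem sq_mem_span_dualQuadric (hμ : IsUnit μ) (h : ∀ n, aeval y (apolarQuadrics μ lam n) = 0) :
    y 8 ^ 2 ∈ Submodule.span k (Set.range (dualQuadric y)) := by
  rw [← sq_eq_sq_of_onDiagonal h (i := 0) rfl, ← Submodule.smul_mem_iff_of_isUnit _ hμ,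
    smul_sq_eq_smul_add h]
  exact Submodule.smul_mem _ _ (add_mem (add_mem (minorPair_mul_mem_span 0)
    (minorPair_mul_mem_span 4)) (minorPair_mul_mem_span 8))

theorem mul_mem_span_dualQuadric (hμ : IsUnit μ) (h : ∀ n, aeval y (apolarQuadrics μ lam n) = 0)
    (i j : Fin 9) : y i * y j ∈ Submodule.span k (Set.range (dualQuadric y)) := by
  have hcongr {a b : Fin 9} (hab : s(i, j) = s(a, b)) : y i * y j = y a * y b := by
    obtain ⟨rfl, rfl⟩ | ⟨rfl, rfl⟩ := Sym2.eq_iff.mp hab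
    exacts [rfl, mul_comm _ _]
  obtain hnull | ⟨rfl, hdiag⟩ | ⟨n, hn⟩ | ⟨n, hn⟩ := isNullPair_or_diagonal_or_minor i j
  · rw [mul_eq_zero_of_isNullPair h hnull]
    exact zero_mem _
  · rw [← pow_two, sq_eq_sq_of_onDiagonal h hdiag]
    exact sq_mem_span_dualQuadric hμ h
  · rw [hcongr hn]
    exact minorPair_mul_mem_span n
  · rw [hcongr hn, eq_sub_of_add_eq' (minorPair_add_minorOppositePair h n)]
    refine sub_mem ?_ (minorPair_mul_mem_span n)
    split_ifs
    exacts [sq_mem_span_dualQuadric hμ h, zero_mem _]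

theorem isCubicDualSystem_dualQuadric (hμ : IsUnit μ)
    (h : ∀ n, aeval y (apolarQuadrics μ lam n) = 0)
    (hy : Function.Surjective (aeval (R := k) y)) :
    IsCubicDualSystem k y (dualQuadric y) (y 1 * y 5 * y 6) where
  aeval_surjective := hy
  mul_mem_span := mul_mem_span_dualQuadric hμ h
  mul_dual i j := by
    split_ifs with hij
    · rw [← hij, mul_dualQuadric_self h]
    · exact mul_dualQuadric_of_ne h hij
  dual_mul_dual := dualQuadric_mul_dualQuadric h

end Relations

section ApolarIdeal

variable {k : Type*} [CommRing k]

/-- The cubic form `F = μ·det₃ − λ(x₁+x₅+x₉)³`. -/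
noncomputable def detSubCube (μ lam : k) : MvPolynomial (Fin 9) k :=
  C μ * det3' k - C lam * (X 0 + X 4 + X 8) ^ 3

theorem pderiv_detSubCube (μ lam : k) (i : Fin 9) :
    pderiv i (detSubCube μ lam) = C μ * (![X 4 * X 8 - X 5 * X 7, X 5 * X 6 - X 3 * X 8,
      X 3 * X 7 - X 4 * X 6, X 2 * X 7 - X 1 * X 8, X 0 * X 8 - X 2 * X 6, X 1 * X 6 - X 0 * X 7,
      X 1 * X 5 - X 2 * X 4, X 2 * X 3 - X 0 * X 5, X 0 * X 4 - X 1 * X 3] i) -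
      C (3 * lam) * (![1, 0, 0, 0, 1, 0, 0, 0, 1] i * (X 0 + X 4 + X 8) ^ 2) := by
  have hC : (C 3 : MvPolynomial (Fin 9) k) = 3 := map_ofNat C 3
  fin_cases i <;>
    simp [detSubCube, det3', hC, pow_succ] <;> ring

theorem diffAction_apolarQuadrics (μ lam : k) (n : Fin 36) :
    diffAction (apolarQuadrics μ lam n) (detSubCube μ lam) = 0 := by
  have hC₃ : (C 3 : MvPolynomial (Fin 9) k) = 3 := map_ofNat C 3
  have hC₆ : (C 6 : MvPolynomial (Fin 9) k) = 6 := map_ofNat C 6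
  fin_cases n <;>
    simp [apolarQuadrics, pow_two, mul_add, mul_assoc, diffAction_add, diffAction_sub,
      diffAction_C_mul, diffAction_X_mul, diffAction_X, pderiv_detSubCube] <;>
    simp only [hC₃, hC₆] <;> ring

theorem diffAction_socle (μ lam c : k) :
    diffAction (C c * (X 1 * X 5 * X 6)) (detSubCube μ lam) = C (c * μ) := by
  simp [diffAction_C_mul, mul_assoc, diffAction_X_mul, diffAction_X, pderiv_detSubCube]

theorem span_apolarQuadrics_le_apolarIdeal (μ lam : k) :
    Ideal.span (Set.range (apolarQuadrics μ lam)) ≤ apolarIdeal (detSubCube μ lam) := by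
  rw [Ideal.span_le]
  rintro _ ⟨n, rfl⟩
  exact diffAction_apolarQuadrics μ lam n

theorem apolarIdeal_detSubCube {μ : k} (hμ : IsUnit μ) (lam : k) :
    apolarIdeal (detSubCube μ lam) = Ideal.span (Set.range (apolarQuadrics μ lam)) := by
  set I := Ideal.span (Set.range (apolarQuadrics μ lam))
  have hI : I ≤ apolarIdeal (detSubCube μ lam) := span_apolarQuadrics_le_apolarIdeal μ lam
  refine le_antisymm ?_ hI
  let y (i : Fin 9) : MvPolynomial (Fin 9) k ⧸ I := Ideal.Quotient.mk I (X i)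
  have haeval (p : MvPolynomial (Fin 9) k) : aeval y p = Ideal.Quotient.mk I p := by
    have hy : aeval y = Ideal.Quotient.mkₐ k I := by
      ext i
      simp [y]
    simp [hy]
  have hsystem : IsCubicDualSystem k y (dualQuadric y) (y 1 * y 5 * y 6) :=
    isCubicDualSystem_dualQuadric (lam := lam) hμ
      (fun n => (haeval _).trans (Ideal.Quotient.eq_zero_iff_mem.mpr (Ideal.subset_span ⟨n, rfl⟩)))
      fun a => (Ideal.Quotient.mk_surjective a).imp fun p hp => (haeval p).trans hp
  have hmap : (apolarIdeal (detSubCube μ lam)).map (Ideal.Quotient.mk I) = ⊥ := by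
    refine hsystem.eq_bot_of_smul_socle_mem fun c hc => ?_
    have hmk : c • (y 1 * y 5 * y 6) = Ideal.Quotient.mk I (C c * (X 1 * X 5 * X 6)) := by
      rw [← haeval]
      simp only [map_mul, aeval_C, aeval_X]
      exact Algebra.smul_def c (y 1 * y 5 * y 6)
    rw [hmk, Ideal.mem_quotient_iff_mem hI] at hc
    have hcμ : C (c * μ) = (0 : MvPolynomial (Fin 9) k) := (diffAction_socle μ lam c).symm.trans hc
    exact hμ.mul_left_eq_zero.mp (C_eq_zero.mp hcμ)
  rwa [Ideal.map_eq_bot_iff_le_ker, Ideal.mk_ker] at hmap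

end ApolarIdeal

theorem apolar_ideal_det3_sub_cube_general {k : Type*} [CommRing k] {μ : k} (hμ : IsUnit μ)
    (lam : k) :
    LinearIndependent k (apolarQuadrics μ lam) ∧
      ∀ θ : MvPolynomial (Fin 9) k,
        diffAction θ (C μ * det3' k - C lam * (X 0 + X 4 + X 8) ^ 3) = 0 ↔
          θ ∈ Ideal.span (Set.range (apolarQuadrics μ lam)) :=
  ⟨linearIndependent_apolarQuadrics hμ lam,
    fun θ => by rw [← apolarIdeal_detSubCube hμ lam]; rfl⟩

/-- For `μ ≠ 0`, the apolar ideal of `F = μ·det₃ − λ(x₁+x₅+x₉)³` is generated by the listed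
36 linearly independent quadrics. -/
theorem apolar_ideal_det3_sub_cube (k : Type*) [Field k] [CharZero k]
    (μ lam : k) (hμ : μ ≠ 0) :
    LinearIndependent k (apolarQuadrics (k := k) μ lam) ∧
      ∀ θ : MvPolynomial (Fin 9) k,
        diffAction θ (C μ * det3' k - C lam * (X 0 + X 4 + X 8) ^ 3) = 0 ↔
          θ ∈ Ideal.span (Set.range (apolarQuadrics (k := k) μ lam)) :=
  apolar_ideal_det3_sub_cube_general hμ.isUnit lam
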